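/- Let v : ℝ × ℝ → ℂ satisfy the Fourier-side fractional KdV-BBM equation (1 + ν|k|^α) ∂_t v(t,k) + iκk v(t,k) − iμ|k|^α k v(t,k) + (iλk/(4π)) ∫_ℝ v(t,k−l) v(t,l) dl = 0 for all (t,k), where t ↦ v(t,k) is differentiable for each k. Assume the reality condition v(t,−k) = conj(v(t,k)) for all (t,k); that for each t the functions k ↦ (1+ν|k|^α)|v(t,k)|² and k ↦ (1+ν|k|^α)|v(t,k)||∂_t v(t,k)| are integrable, the latter dominated locally uniformly in t by an integrable function of k (so that differentiation under the integral sign is justified); and that the double integral ∬ |k| |v(t,k−l)| |v(t,l)| |v(t,k)| dl dk is finite for each t. Then the energy E(t) = ∫_ℝ (1 + ν|k|^α) |v(t,k)|² dk is constant in t. (By Plancherel this is the conservation of I₂ = ∫(u² + ν|D^{α/2}u|²) dx.) -/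

import Mathlib

open MeasureTheory

open Filter Topology ComplexConjugate

theorem tendsto_integral_norm_translate_sub {f : ℝ → ℂ} (hf : Integrable f) :
    Tendsto (fun k : ℝ => ∫ x, ‖f (x - k) - f x‖) (𝓝 0) (𝓝 0) := by
  have hmp : ∀ k : ℝ, MeasurePreserving (fun x : ℝ => x - k) := measurePreserving_sub_right volume
  let g : ℝ → C(ℝ, ℝ) := (ContinuousMap.mk (fun p : ℝ × ℝ => p.2 - p.1) (by fun_prop)).curry
  have hc : Continuous fun k : ℝ =>
      Lp.compMeasurePreserving (p := 1) (g k) (hmp k) (hf.toL1 f) :=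
    Continuous.compMeasurePreservingLp continuous_const (ContinuousMap.continuous _) hmp
      ENNReal.one_ne_top
  have h0 : Tendsto (fun k : ℝ => ‖Lp.compMeasurePreserving (p := 1) (g k) (hmp k) (hf.toL1 f)
      - Lp.compMeasurePreserving (p := 1) (g 0) (hmp 0) (hf.toL1 f)‖) (𝓝 0) (𝓝 0) := by
    have := (hc.sub (continuous_const
      (y := Lp.compMeasurePreserving (p := 1) (g 0) (hmp 0) (hf.toL1 f)))).norm.tendsto 0
    simpa using this
  refine h0.congr fun k => ?_
  rw [L1.norm_eq_integral_norm]
  refine integral_congr_ae ?_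
  have h1 : ∀ k : ℝ, Lp.compMeasurePreserving (p := 1) (g k) (hmp k) (hf.toL1 f)
      =ᵐ[volume] fun x => f (x - k) := fun k =>
    (Lp.coeFn_compMeasurePreserving _ (hmp k)).trans
      ((hmp k).quasiMeasurePreserving.ae_eq_comp hf.coeFn_toL1)
  filter_upwards [Lp.coeFn_sub (Lp.compMeasurePreserving (p := 1) (g k) (hmp k) (hf.toL1 f))
    (Lp.compMeasurePreserving (p := 1) (g 0) (hmp 0) (hf.toL1 f)), h1 k, h1 0] with x h2 h3 h4
  rw [h2, Pi.sub_apply, h3, h4, sub_zero]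

/-- The transfer `a w(a) ∫ w(b) w(-a-b) db` into the frequency `a`. -/
noncomputable def cubicTransfer (w : ℝ → ℂ) (a : ℝ) : ℂ :=
  a * w a * ∫ b, w b * w (-a - b)

/-- A bounded, boundedly supported function with Hermitian symmetry all of whose autocorrelation
products are measurable.  The function itself is not assumed to be measurable. -/
structure IsCorrelationMeasurable (w : ℝ → ℂ) (B L : ℝ) : Prop where
  norm_le : ∀ x, ‖w x‖ ≤ B
  eq_zero : ∀ x, L < |x| → w x = 0
  map_neg : ∀ x, w (-x) = conj (w x)
  aestronglyMeasurable : ∀ k, AEStronglyMeasurable (fun x => w (k - x) * w x)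

namespace IsCorrelationMeasurable

variable {w : ℝ → ℂ} {B L : ℝ}

theorem bound_nonneg (hw : IsCorrelationMeasurable w B L) : 0 ≤ B :=
  (norm_nonneg _).trans (hw.norm_le 0)

theorem aestronglyMeasurable_corr (hw : IsCorrelationMeasurable w B L) (s t : ℝ) :
    AEStronglyMeasurable (fun x => w (x + s) * conj (w (x + t))) := by
  have h := (hw.aestronglyMeasurable (s - t)).comp_measurePreserving
    (measurePreserving_add_right volume s)
  refine h.congr (Eventually.of_forall fun x => ?_)
  simp only [Function.comp_apply]
  rw [← hw.map_neg, mul_comm]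
  ring_nf

theorem aestronglyMeasurable_norm (hw : IsCorrelationMeasurable w B L) :
    AEStronglyMeasurable (fun x => ‖w x‖) := by
  have h := (hw.aestronglyMeasurable_corr 0 0).norm
  have h2 := Real.continuous_sqrt.comp_aestronglyMeasurable h
  refine h2.congr (Eventually.of_forall fun x => ?_)
  simp

theorem integrable_of_norm_le {E : Type*} [NormedAddCommGroup E] {g : ℝ → E} {C L : ℝ}
    (hg : AEStronglyMeasurable g) (hC : ∀ x, ‖g x‖ ≤ C) (hL : ∀ x, L < |x| → g x = 0) :
    Integrable g := by
  have h : IntegrableOn g (Set.Icc (-L) L) :=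
    Measure.integrableOn_of_bounded (M := C) (by simp) hg (Eventually.of_forall hC)
  refine (integrableOn_iff_integrable_of_support_subset fun x hx => ?_).1 h
  by_contra hx'
  exact hx (hL x (lt_of_not_ge fun h' => hx' (abs_le.1 h')))

theorem integrable_corr (hw : IsCorrelationMeasurable w B L) (k : ℝ) :
    Integrable fun x => w x * conj (w (x - k)) := by
  have hB := hw.bound_nonneg
  refine integrable_of_norm_le (C := B * B) (L := L) ?_ (fun x => ?_) fun x hx => ?_
  · simpa [sub_eq_add_neg] using hw.aestronglyMeasurable_corr 0 (-k)
  · rw [norm_mul, RCLike.norm_conj]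
    exact mul_le_mul (hw.norm_le _) (hw.norm_le _) (norm_nonneg _) hB
  · rw [hw.eq_zero x hx, zero_mul]

theorem integrable_norm_sq (hw : IsCorrelationMeasurable w B L) :
    Integrable fun x => ‖w x‖ ^ 2 := by
  have := (hw.integrable_corr 0).norm
  refine this.congr (Eventually.of_forall fun x => ?_)
  simp [sq]

theorem integrable_mul_conj_sub {f : ℝ → ℂ} (hf : Integrable f) :
    Integrable (fun p : ℝ × ℝ => f p.2 * conj (f (p.2 - p.1))) (volume.prod volume) := by
  have hgi : Integrable fun x => conj (f (-x)) :=
    ((LinearIsometryEquiv.integrable_comp_iff Complex.conjLIE).2 hf).comp_neg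
  have h := Integrable.convolution_integrand (ContinuousLinearMap.mul ℝ ℂ) hf hgi
  simpa only [ContinuousLinearMap.mul_apply', neg_sub] using h

theorem norm_sq_integral_eq {f : ℝ → ℂ} (hf : Integrable f) :
    ((‖∫ x, f x‖ ^ 2 : ℝ) : ℂ) = ∫ q, ∫ x, f x * conj (f (x - q)) := by
  rw [integral_integral_swap (f := fun q x => f x * conj (f (x - q))) (integrable_mul_conj_sub hf)]
  have h1 : ∀ x : ℝ, ∫ q, f x * conj (f (x - q)) = f x * conj (∫ z, f z) := by
    intro x
    rw [integral_const_mul, integral_conj, integral_sub_left_eq_self f volume x]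
  rw [integral_congr_ae (Eventually.of_forall h1), integral_mul_const, Complex.mul_conj,
    Complex.normSq_eq_norm_sq]

theorem tendsto_norm_integral_corr (hw : IsCorrelationMeasurable w B L) :
    Tendsto (fun k => ‖∫ x, w x * conj (w (x - k))‖) (𝓝 0) (𝓝 (∫ x, ‖w x‖ ^ 2)) := by
  have hB := hw.bound_nonneg
  set f : ℝ → ℝ → ℂ := fun q x => w x * conj (w (x - q)) with hf
  have hfi : ∀ q, Integrable (f q) := hw.integrable_corr
  have hfB : ∀ q x, ‖f q x‖ ≤ B * B := fun q x => by
    rw [hf, norm_mul, RCLike.norm_conj]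
    exact mul_le_mul (hw.norm_le _) (hw.norm_le _) (norm_nonneg _) hB
  have hsymm : ∀ k q x, f k x * conj (f k (x - q)) = f q x * conj (f q (x - k)) := by
    intro k q x
    simp only [hf, map_mul, Complex.conj_conj, sub_right_comm x q k]
    ring
  have key : ∀ k, ((‖∫ x, f k x‖ ^ 2 : ℝ) : ℂ) = ∫ q, ∫ x, f q x * conj (f q (x - k)) := by
    intro k
    rw [norm_sq_integral_eq (hfi k)]
    exact integral_congr_ae (Eventually.of_forall fun q =>
      integral_congr_ae (Eventually.of_forall fun x => hsymm k q x))
  have hprodint : ∀ q k, Integrable fun x => f q x * conj (f q (x - k)) := fun q k => by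
    refine (hfi q).mul_bdd (c := B * B) ?_ (Eventually.of_forall fun x => ?_)
    · exact (Complex.continuous_conj.comp_aestronglyMeasurable
        ((hfi q).comp_sub_right k).aestronglyMeasurable)
    · rw [RCLike.norm_conj]; exact hfB _ _
  have hlim : Tendsto (fun k => ∫ q, ∫ x, f q x * conj (f q (x - k))) (𝓝 0)
      (𝓝 (∫ q, ∫ x, f q x * conj (f q (x - 0)))) := by
    refine tendsto_integral_filter_of_dominated_convergence
      ((Set.Icc (-(2 * L)) (2 * L)).indicator fun _ => (B * B) * (B * B) * (2 * |L|)) ?_ ?_ ?_ ?_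
    · refine Eventually.of_forall fun k => ?_
      have := (integrable_mul_conj_sub (hfi k)).integral_prod_left.aestronglyMeasurable
      refine this.congr (Eventually.of_forall fun q => ?_)
      exact integral_congr_ae (Eventually.of_forall fun x => hsymm k q x)
    · refine Eventually.of_forall fun k => Eventually.of_forall fun q => ?_
      by_cases hq : q ∈ Set.Icc (-(2 * L)) (2 * L)
      · rw [Set.indicator_of_mem hq]
        have hsub : ∀ x, x ∉ Set.Icc (-L) L → f q x * conj (f q (x - k)) = 0 := by
          intro x hx
          have : w x = 0 := hw.eq_zero x (lt_of_not_ge fun h' => hx (abs_le.1 h'))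
          simp [hf, this]
        rw [← setIntegral_eq_integral_of_forall_compl_eq_zero hsub]
        refine (norm_setIntegral_le_of_norm_le_const (C := (B * B) * (B * B)) (by simp)
          fun x _ => ?_).trans ?_
        · rw [norm_mul, RCLike.norm_conj]
          exact mul_le_mul (hfB _ _) (hfB _ _) (norm_nonneg _) (by positivity)
        · refine mul_le_mul_of_nonneg_left ?_ (by positivity)
          have hL : 0 ≤ L := by linarith [hq.1.trans hq.2]
          rw [Real.volume_real_Icc_of_le (by linarith), abs_of_nonneg hL]
          linarith
      · have hz : ∀ x, f q x = 0 := by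
          intro x
          by_cases hx : L < |x|
          · simp [hf, hw.eq_zero x hx]
          · have : L < |x - q| := by
              by_contra hx'
              apply hq
              have h1 := abs_le.1 (not_lt.1 hx)
              have h2 := abs_le.1 (not_lt.1 hx')
              constructor <;> linarith [h1.1, h1.2, h2.1, h2.2]
            simp [hf, hw.eq_zero _ this]
        simp [hz, hq]
    · exact (integrable_indicator_iff measurableSet_Icc).2 (integrableOn_const (by simp))
    · refine Eventually.of_forall fun q => ?_
      rw [tendsto_iff_norm_sub_tendsto_zero]
      have h0 := (tendsto_integral_norm_translate_sub (hfi q)).const_mul (B * B)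
      rw [mul_zero] at h0
      refine squeeze_zero (fun _ => norm_nonneg _) (fun k => ?_) h0
      rw [← integral_sub (hprodint q k) (hprodint q 0), ← integral_const_mul]
      refine norm_integral_le_of_norm_le
        ((((hfi q).comp_sub_right k).sub (hfi q)).norm.const_mul _)
        (Eventually.of_forall fun x => ?_)
      rw [← mul_sub, ← map_sub, norm_mul, RCLike.norm_conj, sub_zero]
      exact mul_le_mul_of_nonneg_right (hfB _ _) (norm_nonneg _)
  have hsq : Tendsto (fun k => ‖∫ x, f k x‖ ^ 2) (𝓝 0) (𝓝 (‖∫ x, f 0 x‖ ^ 2)) := by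
    rw [← key] at hlim
    simp_rw [← key] at hlim
    exact_mod_cast (Complex.continuous_re.tendsto _).comp hlim
  have h0 : ‖∫ x, f 0 x‖ = ∫ x, ‖w x‖ ^ 2 := by
    have : ∫ x, f 0 x = ((∫ x, ‖w x‖ ^ 2 : ℝ) : ℂ) := by
      rw [← integral_complex_ofReal]
      refine integral_congr_ae (Eventually.of_forall fun x => ?_)
      simp [hf, Complex.mul_conj, Complex.normSq_eq_norm_sq]
    rw [this, Complex.norm_real, Real.norm_of_nonneg (integral_nonneg fun x => by positivity)]
  have := (Real.continuous_sqrt.tendsto _).comp hsq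
  simp only [Function.comp_def, Real.sqrt_sq (norm_nonneg _)] at this
  rwa [h0] at this

/-- Small translates of `w` agree with `w` up to a constant phase, in `L¹`. -/
theorem exists_phase (hw : IsCorrelationMeasurable w B L) {σ : ℝ} (hσ : 0 < σ) (hL : 0 ≤ L) :
    ∃ δ > 0, ∀ k : ℝ, |k| ≤ δ → ∃ z : ℂ, ‖z‖ = 1 ∧
      Integrable (fun x => ‖w x - z * w (x + k)‖) ∧
      ∫ x in (-L)..L, ‖w x - z * w (x + k)‖ ≤ σ := by
  set R : ℝ → ℂ := fun k => ∫ x, w x * conj (w (x - k)) with hR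
  set R₀ : ℝ := ∫ x, ‖w x‖ ^ 2 with hR₀
  set τ : ℝ := σ / (1 + 2 * L) with hτ
  have hτpos : 0 < τ := by positivity
  have hev : ∀ᶠ k in 𝓝 (0 : ℝ), R₀ - τ ^ 2 / 2 < ‖R k‖ :=
    hw.tendsto_norm_integral_corr.eventually_const_lt (by linarith [pow_pos hτpos 2])
  obtain ⟨δ, hδ, hball⟩ := Metric.eventually_nhds_iff.1 hev
  refine ⟨δ / 2, by positivity, fun k hk => ?_⟩
  have hRk : R₀ - τ ^ 2 / 2 < ‖R (-k)‖ := hball (by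
    rw [dist_zero_right, norm_neg, Real.norm_eq_abs]; linarith)
  obtain ⟨z, hz, hzR⟩ : ∃ z : ℂ, ‖z‖ = 1 ∧ conj z * R (-k) = (‖R (-k)‖ : ℂ) := by
    by_cases h : R (-k) = 0
    · exact ⟨1, by simp, by simp [h]⟩
    · have hn : (‖R (-k)‖ : ℂ) ≠ 0 := by simpa using h
      refine ⟨R (-k) / ‖R (-k)‖, by simp [h], ?_⟩
      rw [map_div₀, Complex.conj_ofReal, div_mul_eq_mul_div, mul_comm, Complex.mul_conj,
        Complex.normSq_eq_norm_sq]
      field_simp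
      push_cast
      ring
  have hsq : ∀ x, ‖w x - z * w (x + k)‖ ^ 2 =
      ‖w x‖ ^ 2 + ‖w (x + k)‖ ^ 2 - 2 * (conj z * (w x * conj (w (x - -k)))).re := by
    intro x
    rw [sub_neg_eq_add, ← Complex.normSq_eq_norm_sq, Complex.normSq_sub, Complex.normSq_eq_norm_sq,
      Complex.normSq_eq_norm_sq, norm_mul, hz, one_mul, map_mul]
    ring_nf
  have hi1 := hw.integrable_norm_sq
  have hi2 : Integrable fun x => ‖w (x + k)‖ ^ 2 := hi1.comp_add_right k
  have hi3' : Integrable fun x => conj z * (w x * conj (w (x - -k))) :=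
    (hw.integrable_corr (-k)).const_mul _
  have hi3 : Integrable fun x => 2 * (conj z * (w x * conj (w (x - -k)))).re :=
    hi3'.re.const_mul 2
  have hi12 : Integrable fun x => ‖w x‖ ^ 2 + ‖w (x + k)‖ ^ 2 := hi1.add hi2
  have hi : Integrable fun x => ‖w x - z * w (x + k)‖ ^ 2 := by
    simp_rw [hsq]
    exact hi12.sub hi3
  have hval : ∫ x, ‖w x - z * w (x + k)‖ ^ 2 ≤ τ ^ 2 := by
    simp_rw [hsq]
    rw [integral_sub hi12 hi3, integral_add hi1 hi2, integral_const_mul,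
      integral_add_right_eq_self (fun x => ‖w x‖ ^ 2) k]
    have : ∫ x, (conj z * (w x * conj (w (x - -k)))).re = ‖R (-k)‖ := by
      have h1 : ∫ x, (conj z * (w x * conj (w (x - -k)))).re =
          (∫ x, conj z * (w x * conj (w (x - -k)))).re := integral_re hi3'
      rw [h1, integral_const_mul, hzR, Complex.ofReal_re]
    rw [this]
    linarith
  have hmeas : AEStronglyMeasurable fun x => ‖w x - z * w (x + k)‖ := by
    refine (Real.continuous_sqrt.comp_aestronglyMeasurable hi.aestronglyMeasurable).congr
      (Eventually.of_forall fun x => ?_)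
    simp
  have hint : Integrable fun x => ‖w x - z * w (x + k)‖ := by
    refine integrable_of_norm_le (C := B + B) (L := L + |k|) hmeas (fun x => ?_) fun x hx => ?_
    · rw [norm_norm]
      refine (norm_sub_le _ _).trans (add_le_add (hw.norm_le _) ?_)
      rw [norm_mul, hz, one_mul]
      exact hw.norm_le _
    · have h1 : L < |x| := by linarith [abs_nonneg k]
      have h2 : L < |x + k| := by
        have := abs_sub_abs_le_abs_sub x (-k)
        rw [abs_neg, sub_neg_eq_add] at this
        linarith
      simp [hw.eq_zero _ h1, hw.eq_zero _ h2]
  refine ⟨z, hz, hint, ?_⟩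
  have hLL : -L ≤ L := by linarith
  have hc : IntervalIntegrable (fun x => ‖w x - z * w (x + k)‖ ^ 2 / (2 * τ) + τ / 2)
      volume (-L) L := (hi.div_const _).intervalIntegrable.add intervalIntegrable_const
  calc ∫ x in (-L)..L, ‖w x - z * w (x + k)‖
      ≤ ∫ x in (-L)..L, (‖w x - z * w (x + k)‖ ^ 2 / (2 * τ) + τ / 2) := by
        refine intervalIntegral.integral_mono_on hLL hint.intervalIntegrable hc fun x _ => ?_
        have : ‖w x - z * w (x + k)‖ ^ 2 / (2 * τ) + τ / 2 - ‖w x - z * w (x + k)‖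
            = (‖w x - z * w (x + k)‖ - τ) ^ 2 / (2 * τ) := by
          field_simp
          ring
        have h2 : 0 ≤ (‖w x - z * w (x + k)‖ - τ) ^ 2 / (2 * τ) := by positivity
        linarith
    _ = (∫ x in (-L)..L, ‖w x - z * w (x + k)‖ ^ 2) / (2 * τ) + (L - -L) * (τ / 2) := by
        rw [intervalIntegral.integral_add (hi.div_const _).intervalIntegrable
          intervalIntegrable_const, intervalIntegral.integral_div,
          intervalIntegral.integral_const, smul_eq_mul]
    _ ≤ τ ^ 2 / (2 * τ) + (L - -L) * (τ / 2) := by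
        gcongr
        rw [intervalIntegral.integral_of_le hLL]
        exact (setIntegral_le_integral hi (Eventually.of_forall fun x => by positivity)).trans hval
    _ = τ * (1 + 2 * L) / 2 := by
        field_simp
        ring
    _ ≤ σ := by
        rw [hτ, div_mul_cancel₀ _ (by positivity)]
        linarith

end IsCorrelationMeasurable

theorem integral_eq_integral_sum_lattice {E : Type*} [NormedAddCommGroup E]
    [NormedSpace ℝ E] {f : ℝ → E} (hf : Integrable f) {L : ℝ} {K : ℕ}
    (hK : 0 < K) :
    ∫ x in (-L)..L, f x =
      ∫ x in (0)..(L / K), ∑ i ∈ Finset.range (2 * K), f (x + L / K * ((i : ℝ) - K)) := by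
  have hK' : (K : ℝ) ≠ 0 := by positivity
  rw [intervalIntegral.integral_finsetSum fun i _ => (hf.comp_add_right _).intervalIntegrable]
  have h := intervalIntegral.sum_integral_adjacent_intervals (f := f) (μ := volume)
    (a := fun i : ℕ => L / K * ((i : ℝ) - K)) (n := 2 * K) fun i _ => hf.intervalIntegrable
  have h0 : L / K * (((0 : ℕ) : ℝ) - K) = -L := by field_simp; simp
  have h1 : L / K * (((2 * K : ℕ) : ℝ) - K) = L := by push_cast; field_simp; ring
  simp only [h0, h1] at h
  rw [← h]
  refine Finset.sum_congr rfl fun i _ => ?_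
  rw [intervalIntegral.integral_comp_add_right]
  congr 1 <;> push_cast <;> ring

theorem integral_integral_le_of_diagonal {S : ℝ → ℝ → ℝ} {C h η : ℝ} (hh : 0 ≤ h)
    (hS : AEStronglyMeasurable (fun p : ℝ × ℝ => S p.1 p.2) (volume.prod volume))
    (hS0 : ∀ x y, 0 ≤ S x y) (hSC : ∀ x y, S x y ≤ C)
    (hη : ∀ k, |k| ≤ h → ∫ x in (0)..h, S x (x + k) ≤ η) :
    ∫ x in (0)..h, ∫ y in (0)..h, S x y ≤ 2 * h * η := by
  have hS' : AEStronglyMeasurable (fun p : ℝ × ℝ => S p.1 (p.1 + p.2)) (volume.prod volume) :=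
    hS.comp_measurePreserving (measurePreserving_prod_add volume volume)
  have hint : ∀ {T : ℝ → ℝ → ℝ} (s t : Set ℝ), volume s ≠ ⊤ → volume t ≠ ⊤ →
      AEStronglyMeasurable (fun p : ℝ × ℝ => T p.1 p.2) (volume.prod volume) →
      (∀ x y, 0 ≤ T x y) → (∀ x y, T x y ≤ C) →
      Integrable (fun p : ℝ × ℝ => T p.1 p.2) ((volume.restrict s).prod (volume.restrict t)) := by
    intro T s t hs ht hT h0 hC
    rw [Measure.prod_restrict]
    refine Measure.integrableOn_of_bounded (M := C) ?_ hT (Eventually.of_forall fun p => ?_)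
    · rw [Measure.prod_prod]; exact ENNReal.mul_ne_top hs ht
    · rw [Real.norm_of_nonneg (h0 _ _)]; exact hC _ _
  have i1 := hint (Set.Ioc 0 h) (Set.Ioc 0 h) (by simp) (by simp) hS hS0 hSC
  have i2 := hint (T := fun x k => S x (x + k)) (Set.Ioc 0 h) (Set.Ioc (-h) h) (by simp) (by simp)
    hS' (fun _ _ => hS0 _ _) (fun _ _ => hSC _ _)
  have hhh : -h ≤ h := by linarith
  calc ∫ x in (0)..h, ∫ y in (0)..h, S x y
      ≤ ∫ x in (0)..h, ∫ k in (-h)..h, S x (x + k) := by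
        simp only [intervalIntegral.integral_of_le hh, intervalIntegral.integral_of_le hhh]
        refine integral_mono_ae i1.integral_prod_left i2.integral_prod_left ?_
        filter_upwards [i2.prod_right_ae, ae_restrict_mem measurableSet_Ioc] with x hx hx0
        rw [← intervalIntegral.integral_of_le hh]
        have : ∫ y in (0)..h, S x y = ∫ k in (-x)..(h - x), S x (x + k) := by
          rw [intervalIntegral.integral_comp_add_left (fun y => S x y)]
          simp
        rw [this, intervalIntegral.integral_of_le (by linarith)]
        refine setIntegral_mono_set hx (Eventually.of_forall fun _ => hS0 _ _) ?_
        exact (Set.Ioc_subset_Ioc (by linarith [hx0.2]) (by linarith [hx0.1])).eventuallyLE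
    _ = ∫ k in (-h)..h, ∫ x in (0)..h, S x (x + k) := by
        simp only [intervalIntegral.integral_of_le hh, intervalIntegral.integral_of_le hhh]
        exact integral_integral_swap (f := fun x k => S x (x + k)) i2
    _ ≤ ∫ k in (-h)..h, η := by
        simp only [intervalIntegral.integral_of_le hhh]
        refine setIntegral_mono_on ?_ (integrableOn_const (by simp)) measurableSet_Ioc
          fun k hk => hη k (abs_le.2 ⟨hk.1.le, hk.2⟩)
        simp only [intervalIntegral.integral_of_le hh]
        exact i2.integral_prod_right
    _ = 2 * h * η := by
        rw [intervalIntegral.integral_const, smul_eq_mul]; ring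

namespace IsCorrelationMeasurable

variable {w : ℝ → ℂ} {B L : ℝ}

theorem integrable_conv (hw : IsCorrelationMeasurable w B L) (a : ℝ) {f : ℝ → ℂ}
    (hf : Continuous f) : Integrable fun b => f b * (w b * w (a - b)) := by
  have hB := hw.bound_nonneg
  obtain ⟨C, hC⟩ := (isCompact_Icc (a := -L) (b := L)).exists_bound_of_continuousOn hf.continuousOn
  refine integrable_of_norm_le (C := |C| * (B * B)) (L := L) ?_ (fun x => ?_) fun x hx => ?_
  · refine hf.aestronglyMeasurable.mul ((hw.aestronglyMeasurable a).congr ?_)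
    exact Eventually.of_forall fun x => mul_comm _ _
  · by_cases hx : L < |x|
    · rw [hw.eq_zero x hx]; simp; positivity
    · rw [norm_mul, norm_mul]
      exact mul_le_mul ((hC x (abs_le.1 (not_lt.1 hx))).trans (le_abs_self C))
        (mul_le_mul (hw.norm_le _) (hw.norm_le _) (norm_nonneg _) hB) (by positivity)
        (abs_nonneg _)
  · rw [hw.eq_zero x hx]; simp

theorem cubicTransfer_eq (hw : IsCorrelationMeasurable w B L) (a : ℝ) :
    (3 / 2 : ℂ) * cubicTransfer w a = ∫ b : ℝ, ((a : ℂ) - b) * (w a * w b * w (-a - b)) := by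
  have i0 : Integrable fun b => w b * w (-a - b) := by
    simpa using hw.integrable_conv (-a) (f := fun _ => 1) continuous_const
  have i1 : Integrable fun b : ℝ => (b : ℂ) * (w b * w (-a - b)) :=
    hw.integrable_conv (-a) Complex.continuous_ofReal
  have hhalf : ∫ b : ℝ, (b : ℂ) * (w b * w (-a - b)) =
      -(a : ℂ) * (∫ b, w b * w (-a - b)) - ∫ b : ℝ, (b : ℂ) * (w b * w (-a - b)) := by
    conv_lhs => rw [← integral_sub_left_eq_self _ volume (-a)]
    rw [← integral_const_mul, ← integral_sub (i0.const_mul _) i1]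
    refine integral_congr_ae (Eventually.of_forall fun b => ?_)
    simp only [sub_sub_cancel, Complex.ofReal_sub, Complex.ofReal_neg]
    ring
  have : ∫ b : ℝ, ((a : ℂ) - b) * (w a * w b * w (-a - b)) =
      w a * (a * (∫ b, w b * w (-a - b)) - ∫ b : ℝ, (b : ℂ) * (w b * w (-a - b))) := by
    rw [← integral_const_mul, ← integral_sub (i0.const_mul _) i1, ← integral_const_mul]
    refine integral_congr_ae (Eventually.of_forall fun b => ?_)
    ring
  rw [this, cubicTransfer]
  linear_combination (w a / 2) * hhalf

theorem aestronglyMeasurable_norm_cross (hw : IsCorrelationMeasurable w B L) (s t : ℝ) :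
    AEStronglyMeasurable (fun p : ℝ × ℝ =>
      ‖w (p.1 + s) * w (p.2 + t) - w (p.1 + t) * w (p.2 + s)‖) (volume.prod volume) := by
  have hn : ∀ s, AEStronglyMeasurable fun x => ‖w (x + s)‖ := fun s =>
    hw.aestronglyMeasurable_norm.comp_measurePreserving (measurePreserving_add_right volume s)
  have hc := hw.aestronglyMeasurable_corr
  have h1 : AEStronglyMeasurable (fun p : ℝ × ℝ =>
      (‖w (p.1 + s)‖ * ‖w (p.2 + t)‖) ^ 2 + (‖w (p.1 + t)‖ * ‖w (p.2 + s)‖) ^ 2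
      - 2 * ((w (p.1 + s) * conj (w (p.1 + t))) * (w (p.2 + t) * conj (w (p.2 + s)))).re)
      (volume.prod volume) := by
    refine AEStronglyMeasurable.sub (((hn s).comp_fst.mul (hn t).comp_snd).pow 2 |>.add
      (((hn t).comp_fst.mul (hn s).comp_snd).pow 2)) ?_
    exact (Complex.continuous_re.comp_aestronglyMeasurable
      ((hc s t).comp_fst.mul (hc t s).comp_snd)).const_mul 2
  refine (Real.continuous_sqrt.comp_aestronglyMeasurable h1).congr
    (Eventually.of_forall fun p => ?_)
  beta_reduce
  rw [← Real.sqrt_sq (norm_nonneg (w (p.1 + s) * w (p.2 + t) - w (p.1 + t) * w (p.2 + s)))]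
  congr 1
  rw [← Complex.normSq_eq_norm_sq, Complex.normSq_sub, Complex.normSq_eq_norm_sq,
    Complex.normSq_eq_norm_sq, norm_mul, norm_mul, map_mul]
  ring_nf

end IsCorrelationMeasurable

theorem norm_mul_sub_mul_le {x y x' y' z : ℂ} {B : ℝ} (hx' : ‖x'‖ ≤ B) (hy' : ‖y'‖ ≤ B) :
    ‖x * y' - y * x'‖ ≤ B * (‖x - z * x'‖ + ‖y - z * y'‖) := by
  have e : x * y' - y * x' = y' * (x - z * x') - x' * (y - z * y') := by ring
  rw [e, mul_add]
  refine (norm_sub_le _ _).trans ?_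
  rw [norm_mul, norm_mul]
  gcongr

namespace IsCorrelationMeasurable

variable {w : ℝ → ℂ} {B L : ℝ}

theorem norm_sum_lattice_le (hw : IsCorrelationMeasurable w B L) {K : ℕ} (hK : 0 < K) (hL : 0 < L)
    {x y : ℝ} (hx : x ∈ Set.Ioc 0 (L / K)) (hy : y ∈ Set.Ioc 0 (L / K)) (t : ℕ → ℝ)
    (ht : t = fun i : ℕ => L / K * ((i : ℝ) - K)) :
    ‖∑ i ∈ Finset.range (2 * K), ∑ j ∈ Finset.range (2 * K),
      (((x + t i : ℝ) : ℂ) - (y + t j : ℝ)) *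
        (w (x + t i) * w (y + t j) * w (-(x + t i) - (y + t j)))‖ ≤
    ∑ i ∈ Finset.range (2 * K), ∑ j ∈ Finset.range (2 * K),
      (L * B * ‖w (x + t i) * w (y + t j) - w (x + t j) * w (y + t i)‖ + L / K * B ^ 3) := by
  have hB := hw.bound_nonneg
  set H : ℕ → ℕ → ℂ := fun i j => (((x + t i : ℝ) : ℂ) - (y + t j : ℝ)) *
        (w (x + t i) * w (y + t j) * w (-(x + t i) - (y + t j))) with hH
  have hpair : ∀ i ∈ Finset.range (2 * K), ∀ j ∈ Finset.range (2 * K), ‖H i j + H j i‖ ≤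
      2 * (L * B * ‖w (x + t i) * w (y + t j) - w (x + t j) * w (y + t i)‖ + L / K * B ^ 3) := by
    intro i hi j hj
    have hij : |t i - t j| ≤ 2 * L := by
      have hK' : (0 : ℝ) < K := by positivity
      have hi' : (i : ℝ) ≤ 2 * K := by exact_mod_cast (Finset.mem_range.1 hi).le
      have hj' : (j : ℝ) ≤ 2 * K := by exact_mod_cast (Finset.mem_range.1 hj).le
      have e : t i - t j = L / K * ((i : ℝ) - j) := by rw [ht]; ring
      rw [e, abs_mul, abs_of_pos (by positivity)]
      calc L / K * |(i : ℝ) - j| ≤ L / K * (2 * K) := by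
            gcongr
            rw [abs_le]
            constructor <;> linarith [(Nat.cast_nonneg i : (0 : ℝ) ≤ i),
              (Nat.cast_nonneg j : (0 : ℝ) ≤ j)]
        _ = 2 * L := by field_simp
    have hxy : |x - y| ≤ L / K := by
      rw [abs_le]; constructor <;> linarith [hx.1, hx.2, hy.1, hy.2]
    have harg : -(x + t j) - (y + t i) = -(x + t i) - (y + t j) := by ring
    have e : H i j + H j i =
        ((t i - t j : ℝ) : ℂ) * ((w (x + t i) * w (y + t j) - w (x + t j) * w (y + t i)) *
          w (-(x + t i) - (y + t j))) +
        ((x - y : ℝ) : ℂ) * ((w (x + t i) * w (y + t j) + w (x + t j) * w (y + t i)) *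
          w (-(x + t i) - (y + t j))) := by
      simp only [hH, harg]
      push_cast
      ring
    have h2 : ‖w (x + t i) * w (y + t j) + w (x + t j) * w (y + t i)‖ ≤ B * B + B * B := by
      refine (norm_add_le _ _).trans ?_
      rw [norm_mul, norm_mul]
      gcongr <;> exact hw.norm_le _
    rw [e]
    refine (norm_add_le _ _).trans ?_
    rw [norm_mul, norm_mul, norm_mul, norm_mul, Complex.norm_real, Complex.norm_real,
      Real.norm_eq_abs, Real.norm_eq_abs]
    calc _ ≤ 2 * L * (‖w (x + t i) * w (y + t j) - w (x + t j) * w (y + t i)‖ * B) +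
          L / K * ((B * B + B * B) * B) := by
          gcongr <;> exact hw.norm_le _
      _ = _ := by ring
  have hsum : (2 : ℂ) * ∑ i ∈ Finset.range (2 * K), ∑ j ∈ Finset.range (2 * K), H i j =
      ∑ i ∈ Finset.range (2 * K), ∑ j ∈ Finset.range (2 * K), (H i j + H j i) := by
    simp only [Finset.sum_add_distrib]
    rw [Finset.sum_comm (f := fun i j => H j i), two_mul]
  have h3 : 2 * ‖∑ i ∈ Finset.range (2 * K), ∑ j ∈ Finset.range (2 * K), H i j‖ ≤
      2 * ∑ i ∈ Finset.range (2 * K), ∑ j ∈ Finset.range (2 * K),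
      (L * B * ‖w (x + t i) * w (y + t j) - w (x + t j) * w (y + t i)‖ + L / K * B ^ 3) := by
    have : (2 : ℝ) * ‖∑ i ∈ Finset.range (2 * K), ∑ j ∈ Finset.range (2 * K), H i j‖ =
      ‖(2 : ℂ) * ∑ i ∈ Finset.range (2 * K), ∑ j ∈ Finset.range (2 * K), H i j‖ := by
      rw [norm_mul]; simp
    rw [this, hsum]
    simp only [Finset.mul_sum]
    refine norm_sum_le_of_le _ fun i hi => norm_sum_le_of_le _ fun j hj => hpair i hi j hj
  linarith

theorem cubicTransfer_eq_lattice (hw : IsCorrelationMeasurable w B L) {K : ℕ} (hK : 0 < K)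
    (hL : 0 < L) (a : ℝ) :
    (3 / 2 : ℂ) * cubicTransfer w a = ∫ y in (0)..(L / K), ∑ j ∈ Finset.range (2 * K),
      ((a : ℂ) - (y + L / K * ((j : ℝ) - K) : ℝ)) * (w a * w (y + L / K * ((j : ℝ) - K)) *
        w (-a - (y + L / K * ((j : ℝ) - K)))) ∧
    Integrable fun b : ℝ => ((a : ℂ) - b) * (w a * w b * w (-a - b)) := by
  have hi : Integrable fun b : ℝ => ((a : ℂ) - b) * (w a * w b * w (-a - b)) := by
    refine ((hw.integrable_conv (-a) (f := fun b : ℝ => ((a : ℂ) - b) * w a)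
      (by fun_prop)).congr (Eventually.of_forall fun b => ?_))
    simp only
    ring
  refine ⟨?_, hi⟩
  rw [← integral_eq_integral_sum_lattice (f := fun b : ℝ => ((a : ℂ) - b) *
    (w a * w b * w (-a - b))) hi hK, hw.cubicTransfer_eq, intervalIntegral.integral_of_le
    (by linarith), ← integral_Icc_eq_integral_Ioc]
  refine (setIntegral_eq_integral_of_forall_compl_eq_zero fun b hb => ?_).symm
  rw [hw.eq_zero b (lt_of_not_ge fun h' => hb (abs_le.1 h'))]
  simp

/-- Summed over a fine lattice, the cubic transfer is small in `L¹` of a lattice cell. -/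
theorem exists_lattice_bound (hw : IsCorrelationMeasurable w B L) (hL : 0 < L) {ε : ℝ}
    (hε : 0 < ε) : ∃ K : ℕ, 0 < K ∧ ∃ e : ℝ → ℝ, IntervalIntegrable e volume 0 (L / K) ∧
      (∀ᵐ x, x ∈ Set.Ioc 0 (L / K) →
        ‖∑ i ∈ Finset.range (2 * K), cubicTransfer w (x + L / K * ((i : ℝ) - K))‖ ≤ e x) ∧
      ∫ x in (0)..(L / K), e x ≤ ε := by
  have hB := hw.bound_nonneg
  obtain ⟨δ, hδ, hphase⟩ := hw.exists_phase
    (σ := ε / (2 * (8 * L ^ 2 * B ^ 2 + 1))) (by positivity) hL.le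
  obtain ⟨K, hKpos, hKδ, hKε⟩ : ∃ K : ℕ, 0 < K ∧ L / K ≤ δ ∧
      L / K ≤ ε / (2 * (4 * L ^ 2 * B ^ 3 + 1)) := by
    have hlim := tendsto_const_div_atTop_nhds_zero_nat L
    have h1 := hlim.eventually_le_const hδ
    have h2 := hlim.eventually_le_const
      (show 0 < ε / (2 * (4 * L ^ 2 * B ^ 3 + 1)) by positivity)
    obtain ⟨K, hK⟩ := ((h1.and h2).and (eventually_gt_atTop 0)).exists
    exact ⟨K, hK.2, hK.1.1, hK.1.2⟩
  set σ := ε / (2 * (8 * L ^ 2 * B ^ 2 + 1)) with hσ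
  set h := L / K with hh
  have hK' : (0 : ℝ) < K := by positivity
  have hpos : 0 < h := by positivity
  have hhK : h * K = L := by rw [hh]; field_simp
  set t : ℕ → ℝ := fun i => h * ((i : ℝ) - K) with ht
  set I := Finset.range (2 * K) with hI
  have hIcard : (I.card : ℝ) = 2 * K := by simp [hI]
  set S : ℝ → ℝ → ℝ := fun x y => ∑ i ∈ I, ∑ j ∈ I,
    ‖w (x + t i) * w (y + t j) - w (x + t j) * w (y + t i)‖ with hS
  have hSm : AEStronglyMeasurable (fun p : ℝ × ℝ => S p.1 p.2) (volume.prod volume) :=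
    Finset.aestronglyMeasurable_fun_sum _ fun i _ =>
      Finset.aestronglyMeasurable_fun_sum _ fun j _ => hw.aestronglyMeasurable_norm_cross (t i) (t j)
  have hS0 : ∀ x y, 0 ≤ S x y := fun x y =>
    Finset.sum_nonneg fun i _ => Finset.sum_nonneg fun j _ => norm_nonneg _
  have hSC : ∀ x y, S x y ≤ ∑ i ∈ I, ∑ j ∈ I, (B * B + B * B) := fun x y =>
    Finset.sum_le_sum fun i _ => Finset.sum_le_sum fun j _ => by
      refine (norm_sub_le _ _).trans ?_
      rw [norm_mul, norm_mul]
      gcongr <;> exact hw.norm_le _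
  have hdiag : ∀ k, |k| ≤ h → ∫ x in (0)..h, S x (x + k) ≤ 4 * K * B * σ := by
    intro k hk
    obtain ⟨z, hz, hzi, hzσ⟩ := hphase k (hk.trans hKδ)
    set d : ℝ → ℝ := fun x => ‖w x - z * w (x + k)‖ with hd
    have hle : ∀ x, S x (x + k) ≤ 4 * K * B * ∑ i ∈ I, d (x + t i) := by
      intro x
      calc S x (x + k) ≤ ∑ i ∈ I, ∑ j ∈ I, B * (d (x + t i) + d (x + t j)) := by
            refine Finset.sum_le_sum fun i _ => Finset.sum_le_sum fun j _ => ?_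
            rw [hd]
            simp only [add_right_comm x _ k]
            exact norm_mul_sub_mul_le (hw.norm_le _) (hw.norm_le _)
        _ = 4 * K * B * ∑ i ∈ I, d (x + t i) := by
            simp only [mul_add, Finset.sum_add_distrib, Finset.sum_const, nsmul_eq_mul, hIcard,
              ← Finset.mul_sum]
            ring
    rw [integral_eq_integral_sum_lattice hzi hKpos] at hzσ
    have hsumi : IntervalIntegrable (fun x => ∑ i ∈ I, d (x + t i)) volume 0 h :=
      (integrable_finsetSum _ fun i _ => hzi.comp_add_right (t i)).intervalIntegrable
    calc ∫ x in (0)..h, S x (x + k) ≤ ∫ x in (0)..h, 4 * K * B * ∑ i ∈ I, d (x + t i) := by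
          rw [intervalIntegral.integral_of_le hpos.le, intervalIntegral.integral_of_le hpos.le]
          refine integral_mono_of_nonneg (Eventually.of_forall fun x => hS0 _ _) ?_
            (Eventually.of_forall hle)
          exact ((hsumi.const_mul _).1)
      _ = 4 * K * B * ∫ x in (0)..h, ∑ i ∈ I, d (x + t i) := intervalIntegral.integral_const_mul _ _
      _ ≤ 4 * K * B * σ := by gcongr
  have hdouble := integral_integral_le_of_diagonal hpos.le hSm hS0 hSC hdiag
  have hSi : Integrable (fun p : ℝ × ℝ => S p.1 p.2)
      ((volume.restrict (Set.Ioc 0 h)).prod (volume.restrict (Set.Ioc 0 h))) := by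
    rw [Measure.prod_restrict]
    refine Measure.integrableOn_of_bounded (M := ∑ i ∈ I, ∑ j ∈ I, (B * B + B * B)) ?_ hSm
      (Eventually.of_forall fun p => ?_)
    · rw [Measure.prod_prod]; exact ENNReal.mul_ne_top (by simp) (by simp)
    · rw [Real.norm_of_nonneg (hS0 _ _)]; exact hSC _ _
  have hSx : IntervalIntegrable (fun x => ∫ y in (0)..h, S x y) volume 0 h := by
    rw [intervalIntegrable_iff_integrableOn_Ioc_of_le hpos.le]
    simp only [intervalIntegral.integral_of_le hpos.le]
    exact hSi.integral_prod_left
  refine ⟨K, hKpos, fun x => L * B * (∫ y in (0)..h, S x y) + h * (4 * K ^ 2 * h * B ^ 3),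
    (hSx.const_mul _).add intervalIntegrable_const, ?_, ?_⟩
  · filter_upwards [(ae_restrict_iff' measurableSet_Ioc).1 hSi.prod_right_ae] with x hx hx0
    have hxi : IntervalIntegrable (fun y => S x y) volume 0 h := by
      rw [intervalIntegrable_iff_integrableOn_Ioc_of_le hpos.le]; exact hx hx0
    have hP : (3 / 2 : ℂ) * ∑ i ∈ I, cubicTransfer w (x + t i) =
        ∫ y in (0)..h, ∑ i ∈ I, ∑ j ∈ I, (((x + t i : ℝ) : ℂ) - (y + t j : ℝ)) *
        (w (x + t i) * w (y + t j) * w (-(x + t i) - (y + t j))) := by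
      rw [intervalIntegral.integral_finsetSum, Finset.mul_sum]
      · exact Finset.sum_congr rfl fun i _ => (hw.cubicTransfer_eq_lattice hKpos hL (x + t i)).1
      · intro i _
        exact (integrable_finsetSum _ fun j _ =>
          (hw.cubicTransfer_eq_lattice hKpos hL (x + t i)).2.comp_add_right (t j)).intervalIntegrable
    have hbound : ‖(3 / 2 : ℂ) * ∑ i ∈ I, cubicTransfer w (x + t i)‖ ≤
        L * B * (∫ y in (0)..h, S x y) + h * (4 * K ^ 2 * h * B ^ 3) := by
      have e : L * B * (∫ y in (0)..h, S x y) + h * (4 * K ^ 2 * h * B ^ 3) =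
          ∫ y in (0)..h, (L * B * S x y + 4 * K ^ 2 * h * B ^ 3) := by
        rw [intervalIntegral.integral_add (hxi.const_mul _) intervalIntegrable_const,
          intervalIntegral.integral_const_mul, intervalIntegral.integral_const, smul_eq_mul,
          sub_zero]
      rw [hP, e]
      refine intervalIntegral.norm_integral_le_of_norm_le hpos.le
        (Eventually.of_forall fun y hy => ?_) ((hxi.const_mul _).add intervalIntegrable_const)
      refine (hw.norm_sum_lattice_le hKpos hL hx0 hy t ht).trans (le_of_eq ?_)
      simp only [Finset.sum_add_distrib, ← Finset.mul_sum, Finset.sum_const, nsmul_eq_mul]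
      rw [← hI, hIcard]
      ring
    refine le_trans ?_ hbound
    rw [norm_mul]
    have : ‖(3 / 2 : ℂ)‖ = 3 / 2 := by norm_num
    rw [this]
    linarith [norm_nonneg (∑ i ∈ I, cubicTransfer w (x + t i))]
  · rw [intervalIntegral.integral_add (hSx.const_mul _) intervalIntegrable_const,
      intervalIntegral.integral_const_mul, intervalIntegral.integral_const, smul_eq_mul, sub_zero]
    calc _ ≤ L * B * (2 * h * (4 * K * B * σ)) + h * (h * (4 * K ^ 2 * h * B ^ 3)) := by
          gcongr
      _ = 8 * (h * K) * L * B ^ 2 * σ + 4 * (h * K) ^ 2 * B ^ 3 * h := by ring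
      _ = 8 * L ^ 2 * B ^ 2 * σ + 4 * L ^ 2 * B ^ 3 * h := by rw [hhK]; ring
      _ ≤ ε / 2 + ε / 2 := by
          refine add_le_add ?_ ?_
          · rw [hσ, mul_div_assoc', div_le_div_iff₀ (by positivity) (by positivity)]
            nlinarith
          · calc 4 * L ^ 2 * B ^ 3 * h
                ≤ 4 * L ^ 2 * B ^ 3 * (ε / (2 * (4 * L ^ 2 * B ^ 3 + 1))) := by gcongr
              _ ≤ ε / 2 := by
                rw [mul_div_assoc', div_le_div_iff₀ (by positivity) (by positivity)]
                nlinarith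
      _ = ε := by ring

end IsCorrelationMeasurable

theorem IsCorrelationMeasurable.abs_integral_le {w : ℝ → ℂ} {B L : ℝ}
    (hw : IsCorrelationMeasurable w B L) (hL : 0 < L) {m d : ℝ → ℝ} (hm : Integrable m)
    (hd : Integrable d) (hmd : ∀ a, |m a - (cubicTransfer w a).im| ≤ d a) :
    |∫ a, m a| ≤ ∫ a, d a := by
  refine le_of_forall_pos_le_add fun ε hε => ?_
  obtain ⟨K, hK, e, hei, hle, heε⟩ := hw.exists_lattice_bound hL hε
  have hLL : -L ≤ L := by linarith
  have hh : 0 ≤ L / K := by positivity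
  have hin : |∫ a in Set.Ioc (-L) L, m a| ≤ (∫ a in Set.Ioc (-L) L, d a) + ε := by
    rw [← intervalIntegral.integral_of_le hLL, ← intervalIntegral.integral_of_le hLL,
      integral_eq_integral_sum_lattice hm hK, integral_eq_integral_sum_lattice hd hK]
    have hsd : IntervalIntegrable (fun x => ∑ i ∈ Finset.range (2 * K),
        d (x + L / K * ((i : ℝ) - K))) volume 0 (L / K) :=
      (integrable_finsetSum _ fun i _ => hd.comp_add_right _).intervalIntegrable
    refine le_trans ?_ (add_le_add_right heε _)
    rw [← intervalIntegral.integral_add hsd hei, ← Real.norm_eq_abs]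
    refine intervalIntegral.norm_integral_le_of_norm_le hh ?_ (hsd.add hei)
    filter_upwards [hle] with x hx hx0
    have h1 := (Complex.abs_im_le_norm _).trans (hx hx0)
    rw [Complex.im_sum] at h1
    have h2 : |∑ i ∈ Finset.range (2 * K), (m (x + L / K * ((i : ℝ) - K)) -
        (cubicTransfer w (x + L / K * ((i : ℝ) - K))).im)| ≤
        ∑ i ∈ Finset.range (2 * K), d (x + L / K * ((i : ℝ) - K)) :=
      Finset.abs_sum_le_sum_abs _ _ |>.trans (Finset.sum_le_sum fun i _ => hmd _)
    rw [Finset.sum_sub_distrib] at h2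
    rw [Real.norm_eq_abs]
    have h3 := abs_add_le (∑ i ∈ Finset.range (2 * K), m (x + L / K * ((i : ℝ) - K)) -
      ∑ i ∈ Finset.range (2 * K), (cubicTransfer w (x + L / K * ((i : ℝ) - K))).im)
      (∑ i ∈ Finset.range (2 * K), (cubicTransfer w (x + L / K * ((i : ℝ) - K))).im)
    rw [sub_add_cancel] at h3
    linarith
  have hout : |∫ a in (Set.Ioc (-L) L)ᶜ, m a| ≤ ∫ a in (Set.Ioc (-L) L)ᶜ, d a := by
    rw [← Real.norm_eq_abs]
    refine norm_integral_le_of_norm_le hd.integrableOn ?_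
    filter_upwards [ae_restrict_mem measurableSet_Ioc.compl,
      (ae_restrict_of_ae (measure_eq_zero_iff_ae_notMem.1 (measure_singleton (-L))))] with a ha ha'
    have : cubicTransfer w a = 0 := by
      have : w a = 0 := by
        refine hw.eq_zero a (lt_of_not_ge fun h => ha ?_)
        have := abs_le.1 h
        exact ⟨lt_of_le_of_ne this.1 fun h' => ha' h'.symm, this.2⟩
      simp [cubicTransfer, this]
    have h := hmd a
    rwa [this, Complex.zero_im, sub_zero] at h
  rw [← integral_add_compl measurableSet_Ioc hm, ← integral_add_compl measurableSet_Ioc hd]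
  refine (abs_add_le _ _).trans ?_
  linarith

/-- The cut-off to the frequencies and amplitudes of size at most `N`. -/
noncomputable def cutoff (v : ℝ → ℂ) (N x : ℝ) : ℝ :=
  if |x| ≤ N ∧ ‖v x‖ ≤ N then 1 else 0

section cutoff

variable {v : ℝ → ℂ} {N : ℝ}

theorem cutoff_nonneg (x : ℝ) : 0 ≤ cutoff v N x := by
  unfold cutoff; split_ifs <;> simp

theorem cutoff_le_one (x : ℝ) : cutoff v N x ≤ 1 := by
  unfold cutoff; split_ifs <;> simp

theorem cutoff_neg (hreal : ∀ k, v (-k) = conj (v k)) (x : ℝ) :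
    cutoff v N (-x) = cutoff v N x := by
  simp [cutoff, hreal]

theorem eventually_cutoff_eq_one (x : ℝ) : ∀ᶠ n : ℕ in atTop, cutoff v n x = 1 := by
  obtain ⟨M, hM⟩ := exists_nat_ge (max |x| ‖v x‖)
  filter_upwards [eventually_ge_atTop M] with n hn
  have : max |x| ‖v x‖ ≤ n := hM.trans (by exact_mod_cast hn)
  exact if_pos (max_le_iff.1 this)

theorem aestronglyMeasurable_cutoff (hv : AEStronglyMeasurable fun x => ‖v x‖) :
    AEStronglyMeasurable (cutoff v N) := by
  have h : Measurable fun p : ℝ × ℝ => if |p.1| ≤ N ∧ p.2 ≤ N then (1 : ℝ) else 0 := by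
    refine Measurable.ite ?_ measurable_const measurable_const
    exact (measurableSet_le measurable_fst.abs measurable_const).inter
      (measurableSet_le measurable_snd measurable_const)
  exact (h.comp_aemeasurable (aemeasurable_id.prodMk hv.aemeasurable)).aestronglyMeasurable

theorem isCorrelationMeasurable_cutoff (hN : 0 ≤ N)
    (hv : ∀ k, Integrable fun l => v (k - l) * v l)
    (hvn : AEStronglyMeasurable fun x => ‖v x‖) (hreal : ∀ k, v (-k) = conj (v k)) :
    IsCorrelationMeasurable (fun x => cutoff v N x * v x) N N where
  norm_le x := by
    unfold cutoff
    split_ifs with h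
    · simpa using h.2
    · simpa using hN
  eq_zero x hx := by simp [cutoff, hx.not_ge]
  map_neg x := by simp [cutoff_neg hreal, hreal]
  aestronglyMeasurable k := by
    have h := aestronglyMeasurable_cutoff (N := N) hvn
    have h' := h.comp_measurePreserving (Measure.measurePreserving_sub_left volume k)
    refine ((Complex.continuous_ofReal.comp_aestronglyMeasurable (h'.mul h)).mul
      (hv k).aestronglyMeasurable).congr (Eventually.of_forall fun x => ?_)
    simp only [Pi.mul_apply, Function.comp_apply, Complex.ofReal_mul]
    ring

end cutoff

/-- The cubic interaction transfers no net energy between frequencies.  Measurability of `v` is not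
assumed, so Fubini's theorem is applied only to measurable quantities built from translates of
truncations of `v`. -/
theorem integral_im_cubicTransfer_eq_zero {v : ℝ → ℂ}
    (hv : ∀ k, Integrable fun l => v (k - l) * v l) (hreal : ∀ k, v (-k) = conj (v k))
    (hdouble : Integrable fun p : ℝ × ℝ => |p.1| * ‖v (p.1 - p.2)‖ * ‖v p.2‖ * ‖v p.1‖)
    (hm : Integrable fun a => (cubicTransfer v a).im) :
    ∫ a, (cubicTransfer v a).im = 0 := by
  have hvn : AEStronglyMeasurable fun x => ‖v x‖ := by
    refine (Real.continuous_sqrt.comp_aestronglyMeasurable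
      (hv 0).aestronglyMeasurable.norm).congr (Eventually.of_forall fun x => ?_)
    simp [hreal]
  set D : ℕ → ℝ × ℝ → ℝ := fun n p => |p.1| * ‖v (p.1 - p.2)‖ * ‖v p.2‖ * ‖v p.1‖ *
    (1 - cutoff v n (p.1 - p.2) * cutoff v n p.2 * cutoff v n p.1) with hD
  have hprod : ∀ (n : ℕ) (p : ℝ × ℝ),
      0 ≤ cutoff v n (p.1 - p.2) * cutoff v n p.2 * cutoff v n p.1 ∧
      cutoff v n (p.1 - p.2) * cutoff v n p.2 * cutoff v n p.1 ≤ 1 := fun n p =>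
    ⟨mul_nonneg (mul_nonneg (cutoff_nonneg _) (cutoff_nonneg _)) (cutoff_nonneg _),
      mul_le_one₀ (mul_le_one₀ (cutoff_le_one _) (cutoff_nonneg _) (cutoff_le_one _))
        (cutoff_nonneg _) (cutoff_le_one _)⟩
  have hDle : ∀ n p, ‖D n p‖ ≤ |p.1| * ‖v (p.1 - p.2)‖ * ‖v p.2‖ * ‖v p.1‖ := by
    intro n p
    obtain ⟨h0, h1⟩ := hprod n p
    rw [Real.norm_of_nonneg (mul_nonneg (by positivity) (by linarith))]
    exact mul_le_of_le_one_right (by positivity) (by linarith)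
  have hDm : ∀ n, AEStronglyMeasurable (D n) := by
    intro n
    have h := aestronglyMeasurable_cutoff (N := n) hvn
    refine hdouble.aestronglyMeasurable.mul (aestronglyMeasurable_const.sub
      (((h.comp_quasiMeasurePreserving
        (quasiMeasurePreserving_sub_of_right_invariant volume volume)).mul h.comp_snd).mul
        h.comp_fst))
  have hDi : ∀ n, Integrable (D n) := fun n =>
    hdouble.mono' (hDm n) (Eventually.of_forall (hDle n))
  have hlim : Tendsto (fun n => ∫ p, D n p) atTop (𝓝 0) := by
    have := tendsto_integral_of_dominated_convergence (f := fun _ : ℝ × ℝ => (0 : ℝ)) _ hDm hdouble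
      (fun n => Eventually.of_forall (hDle n)) (Eventually.of_forall fun p => ?_)
    · simpa using this
    · refine tendsto_const_nhds.congr' ?_
      filter_upwards [eventually_cutoff_eq_one (v := v) (p.1 - p.2),
        eventually_cutoff_eq_one (v := v) p.2,
        eventually_cutoff_eq_one (v := v) p.1] with n h1 h2 h3
      simp [hD, h1, h2, h3]
  have hle : ∀ᶠ n : ℕ in atTop, |∫ a, (cubicTransfer v a).im| ≤ ∫ p, D n p := by
    filter_upwards [eventually_gt_atTop 0] with n hn
    have hn' : (0 : ℝ) < n := by exact_mod_cast hn
    have hw := isCorrelationMeasurable_cutoff hn'.le hv hvn hreal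
    have e : ∫ p, D n p = ∫ a, ∫ l, D n (a, l) := integral_prod _ (hDi n)
    rw [e]
    refine hw.abs_integral_le hn' hm (hDi n).integral_prod_left fun a => ?_
    rw [← Complex.sub_im]
    refine (Complex.abs_im_le_norm _).trans ?_
    set w : ℝ → ℂ := fun x => cutoff v n x * v x with hwdef
    have i1 : Integrable fun b => v b * v (-a - b) :=
      (hv (-a)).congr (Eventually.of_forall fun b => mul_comm _ _)
    have i2 : Integrable fun b => w b * w (-a - b) := by
      simpa using hw.integrable_conv (-a) (f := fun _ => 1) continuous_const
    have hdiff : cubicTransfer v a - cubicTransfer w a =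
        ∫ l : ℝ, (a * v a * (v (-l) * v (-a - -l)) - a * w a * (w (-l) * w (-a - -l))) := by
      rw [integral_neg_eq_self (fun b : ℝ => a * v a * (v b * v (-a - b)) -
        a * w a * (w b * w (-a - b))) volume, integral_sub (i1.const_mul _) (i2.const_mul _),
        integral_const_mul, integral_const_mul, cubicTransfer, cubicTransfer]
    rw [hdiff]
    refine (norm_integral_le_integral_norm _).trans (le_of_eq ?_)
    refine integral_congr_ae (Eventually.of_forall fun l => ?_)
    have harg : -a - -l = -(a - l) := by ring
    obtain ⟨-, h1⟩ := hprod n (a, l)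
    have hfac : (a : ℂ) * v a * (v (-l) * v (-a - -l)) - a * w a * (w (-l) * w (-a - -l)) =
        a * v (-(a - l)) * v (-l) * v a *
        ((1 - cutoff v n (a - l) * cutoff v n l * cutoff v n a : ℝ) : ℂ) := by
      simp only [hwdef, harg, cutoff_neg hreal]
      push_cast
      ring
    beta_reduce
    rw [hfac]
    simp only [hD, norm_mul, Complex.norm_real, hreal, RCLike.norm_conj, Real.norm_eq_abs]
    rw [abs_of_nonneg (sub_nonneg.2 h1)]
  exact abs_eq_zero.1 (le_antisymm (ge_of_tendsto hlim hle) (abs_nonneg _))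

/-- conservation of the energy `E(t) = ∫ (1+ν|k|^α)|v(t,k)|² dk` for solutions
of the Fourier-side fractional KdV-BBM equation
`(1+ν|k|^α)∂ₜv + iκk v − iμ|k|^α k v + (iλk/(4π)) v∗v = 0` satisfying the reality condition
`v(t,−k) = conj v(t,k)` and suitable integrability assumptions (by Plancherel this is the
conservation of `I₂ = ∫ (u² + ν|D^{α/2}u|²) dx`). -/
theorem fourier_fkdvbbm_energy_conservation (κ μ lam ν α : ℝ) (hlam : 0 < lam)
    (hν : 0 < ν) (hα : α ∈ Set.Ioo (0 : ℝ) 1) (v : ℝ → ℝ → ℂ)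
    (hdiff : ∀ k : ℝ, Differentiable ℝ fun t => v t k)
    (hconv : ∀ t k : ℝ, Integrable fun l : ℝ => v t (k - l) * v t l)
    (heq : ∀ t k : ℝ,
      ((1 + ν * |k| ^ α : ℝ) : ℂ) * deriv (fun s => v s k) t
        + Complex.I * (κ : ℂ) * (k : ℂ) * v t k
        - Complex.I * (μ : ℂ) * ((|k| ^ α : ℝ) : ℂ) * (k : ℂ) * v t k
        + Complex.I * (lam : ℂ) * (k : ℂ) / (4 * (Real.pi : ℂ)) *
            ∫ l : ℝ, v t (k - l) * v t l = 0)
    (hreal : ∀ t k : ℝ, v t (-k) = starRingEnd ℂ (v t k))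
    (hE : ∀ t : ℝ, Integrable fun k : ℝ => (1 + ν * |k| ^ α) * ‖v t k‖ ^ 2)
    (hE' : ∀ t : ℝ, Integrable fun k : ℝ =>
      (1 + ν * |k| ^ α) * ‖v t k‖ * ‖deriv (fun s => v s k) t‖)
    (hdom : ∀ T : ℝ, 0 < T → ∃ g : ℝ → ℝ, Integrable g ∧
      ∀ t : ℝ, |t| ≤ T → ∀ k : ℝ,
        (1 + ν * |k| ^ α) * ‖v t k‖ * ‖deriv (fun s => v s k) t‖ ≤ g k)
    (hdouble : ∀ t : ℝ, Integrable fun p : ℝ × ℝ =>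
      |p.1| * ‖v t (p.1 - p.2)‖ * ‖v t p.2‖ * ‖v t p.1‖) :
    ∀ t : ℝ, (∫ k : ℝ, (1 + ν * |k| ^ α) * ‖v t k‖ ^ 2)
      = ∫ k : ℝ, (1 + ν * |k| ^ α) * ‖v 0 k‖ ^ 2 := by
  have hmem : ∀ (t k : ℝ), HasDerivAt (fun s => (1 + ν * |k| ^ α) * ‖v s k‖ ^ 2)
      (-(lam / (2 * Real.pi)) * (cubicTransfer (v t) (-k)).im) t := by
    intro t k
    have hd := (hdiff k t).hasDerivAt.norm_sq.const_mul (1 + ν * |k| ^ α)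
    refine hd.congr_deriv ?_
    have hT : cubicTransfer (v t) (-k) =
        -(k * (conj (v t k) * ∫ l, v t (k - l) * v t l)) := by
      rw [cubicTransfer, hreal, neg_neg, Complex.ofReal_neg]
      simp_rw [mul_comm (v t _) (v t (k - _))]
      ring
    have h1 : ((1 + ν * |k| ^ α : ℝ) : ℂ) * (conj (v t k) * deriv (fun s => v s k) t) =
        -(Complex.I * ((κ * k - μ * |k| ^ α * k : ℝ) : ℂ) * (v t k * conj (v t k))) +
          Complex.I * ((lam / (4 * Real.pi) : ℝ) : ℂ) * cubicTransfer (v t) (-k) := by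
      rw [hT]
      push_cast
      have hpi : (Real.pi : ℂ) ≠ 0 := by exact_mod_cast Real.pi_ne_zero
      have h2 := heq t k
      push_cast at h2
      linear_combination (conj (v t k)) * h2
    have h2 := congrArg Complex.re h1
    rw [Complex.re_ofReal_mul, Complex.mul_conj] at h2
    simp only [Complex.add_re, Complex.neg_re, Complex.mul_re, Complex.mul_im, Complex.I_re,
      Complex.I_im, Complex.ofReal_re, Complex.ofReal_im] at h2
    rw [Complex.inner, Complex.mul_re]
    linear_combination 2 * h2
  have hderiv : ∀ t, HasDerivAt (fun s => ∫ k, (1 + ν * |k| ^ α) * ‖v s k‖ ^ 2) 0 t := by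
    intro t
    obtain ⟨g, hg, hgle⟩ := hdom (|t| + 1) (by positivity)
    have hmeas : AEStronglyMeasurable
        fun k => -(lam / (2 * Real.pi)) * (cubicTransfer (v t) (-k)).im := by
      refine aestronglyMeasurable_of_tendsto_ae (𝓝[≠] (0 : ℝ))
        (f := fun s k => s⁻¹ • ((1 + ν * |k| ^ α) * ‖v (t + s) k‖ ^ 2
          - (1 + ν * |k| ^ α) * ‖v t k‖ ^ 2))
        (fun s => (((hE (t + s)).sub (hE t)).smul s⁻¹).aestronglyMeasurable)
        (Eventually.of_forall fun k => hasDerivAt_iff_tendsto_slope_zero.1 (hmem t k))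
    have hbound : ∀ k, ∀ s ∈ Metric.ball t 1,
        ‖-(lam / (2 * Real.pi)) * (cubicTransfer (v s) (-k)).im‖ ≤ 2 * g k := by
      intro k s hs
      have hs' : |s| ≤ |t| + 1 := by
        rw [Metric.mem_ball, Real.dist_eq] at hs
        linarith [abs_sub_abs_le_abs_sub s t]
      refine le_trans ?_ (mul_le_mul_of_nonneg_left (hgle s hs' k) zero_le_two)
      have hw : 0 ≤ 1 + ν * |k| ^ α := by positivity
      rw [(hmem s k).unique ((hdiff k s).hasDerivAt.norm_sq.const_mul (1 + ν * |k| ^ α)),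
        norm_mul, norm_mul, Real.norm_of_nonneg hw, Real.norm_ofNat]
      have := mul_le_mul_of_nonneg_left
        (norm_inner_le_norm (𝕜 := ℝ) (v s k) (deriv (fun s => v s k) s)) hw
      linarith
    obtain ⟨hint, hder⟩ := hasDerivAt_integral_of_dominated_loc_of_deriv_le
      (μ := volume) (x₀ := t) (s := Metric.ball t 1) (bound := fun k => 2 * g k)
      (F := fun s k => (1 + ν * |k| ^ α) * ‖v s k‖ ^ 2)
      (F' := fun s k => -(lam / (2 * Real.pi)) * (cubicTransfer (v s) (-k)).im)
      (Metric.ball_mem_nhds t one_pos) (Eventually.of_forall fun s => (hE s).aestronglyMeasurable)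
      (hE t) hmeas
      (Eventually.of_forall hbound) (hg.const_mul 2)
      (Eventually.of_forall fun k s _ => hmem s k)
    have hc : lam / (2 * Real.pi) ≠ 0 := (div_pos hlam (by positivity)).ne'
    have him : Integrable fun a => (cubicTransfer (v t) a).im := by
      have h := (hint.const_mul (-(lam / (2 * Real.pi)))⁻¹).comp_neg
      refine h.congr (Eventually.of_forall fun a => ?_)
      simp only [neg_neg]
      rw [inv_mul_cancel_left₀ (neg_ne_zero.2 hc)]
    rw [integral_const_mul, integral_neg_eq_self (fun a => (cubicTransfer (v t) a).im),
      integral_im_cubicTransfer_eq_zero (hconv t) (hreal t) (hdouble t) him, mul_zero] at hder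
    exact hder
  intro t
  exact is_const_of_deriv_eq_zero (fun s => (hderiv s).differentiableAt)
    (fun s => (hderiv s).deriv) t 0
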